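/- Let I ∈ Ins(Ω,H,K) be an instrument and B ∈ O(Λ,H) a POVM. Then I is compatible with B if and only if I is compatible with J^B for any (equivalently, every) measure-and-prepare instrument J^B ∈ Ins(Λ,H,V) that measures B, i.e. J^B_y(ρ) = tr[B(y)ρ] ξ_y for some states ξ_y ∈ S(V). -/

import Mathlib

open scoped Kronecker ComplexOrder
open Matrix

noncomputable section

/-- Linear maps between matrix algebras, representing super-operators
`L(H) → L(K)` for finite-dimensional Hilbert spaces with index types `dH`, `dK`. -/
abbrev MatMap (dH dK : Type) : Type := Matrix dH dH ℂ →ₗ[ℂ] Matrix dK dK ℂ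

variable {Ω Λ dH dK dV dA dA' : Type}

/-- The Choi matrix of a super-operator. -/
def choiMatrix [DecidableEq dH] (Φ : MatMap dH dK) : Matrix (dH × dK) (dH × dK) ℂ :=
  fun p q => Φ (single p.1 q.1 1) p.2 q.2

/-- Complete positivity of a super-operator (positivity of its Choi matrix). -/
def IsCP [Fintype dH] [DecidableEq dH] [Fintype dK] (Φ : MatMap dH dK) : Prop :=
  (choiMatrix Φ).PosSemidef

/-- A quantum state: a positive semidefinite matrix of unit trace. -/
def IsState [Fintype dH] (ρ : Matrix dH dH ℂ) : Prop := ρ.PosSemidef ∧ ρ.trace = 1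

/-- Trace-nonincreasing super-operator. -/
def IsTNI [Fintype dH] [Fintype dK] (Φ : MatMap dH dK) : Prop :=
  ∀ ρ : Matrix dH dH ℂ, ρ.PosSemidef → (Φ ρ).trace ≤ ρ.trace

/-- Trace-preserving super-operator. -/
def IsTP [Fintype dH] [Fintype dK] (Φ : MatMap dH dK) : Prop :=
  ∀ ρ : Matrix dH dH ℂ, (Φ ρ).trace = ρ.trace

/-- A quantum instrument with outcome set `Ω` from system `dH` to system `dK`:
a family of completely positive trace-nonincreasing maps summing to a channel. -/
structure Instrument (Ω dH dK : Type) [Fintype Ω] [Fintype dH] [DecidableEq dH]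
    [Fintype dK] : Type where
  op : Ω → MatMap dH dK
  cp : ∀ x, IsCP (op x)
  tni : ∀ x, IsTNI (op x)
  tp : IsTP (∑ x, op x)

/-- A quantum channel: a completely positive trace-preserving super-operator. -/
structure Channel (dH dK : Type) [Fintype dH] [DecidableEq dH] [Fintype dK] : Type where
  map : MatMap dH dK
  cp : IsCP map
  tp : IsTP map

/-- A POVM with outcome set `Ω` on system `d`. -/
structure POVM (Ω d : Type) [Fintype Ω] [Fintype d] [DecidableEq d] : Type where
  elem : Ω → Matrix d d ℂ
  pos : ∀ x, (elem x).PosSemidef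
  sum_eq : ∑ x, elem x = 1

/-- The effect (induced POVM element) of an operation `Φ`:
the unique matrix `A` with `tr[A ρ] = tr[Φ ρ]` for all `ρ`. -/
def dualId [Fintype dH] [DecidableEq dH] [Fintype dK] (Φ : MatMap dH dK) :
    Matrix dH dH ℂ :=
  fun i j => (Φ (single j i 1)).trace

/-- Partial trace over the first tensor factor. -/
def ptraceL [Fintype dA] (M : Matrix (dA × dK) (dA × dK) ℂ) : Matrix dK dK ℂ :=
  fun i j => ∑ a, M (a, i) (a, j)

/-- Partial trace over the second tensor factor. -/
def ptraceR [Fintype dV] (M : Matrix (dK × dV) (dK × dV) ℂ) : Matrix dK dK ℂ :=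
  fun i j => ∑ b, M (i, b) (j, b)

/-- Compatibility of two instruments: existence of a joint instrument whose
partial-trace marginals (summed over the other outcome) reproduce both instruments
on all states. -/
def InsCompatible [Fintype Ω] [Fintype Λ] [Fintype dH] [DecidableEq dH] [Fintype dK]
    [Fintype dV] (I : Instrument Ω dH dK) (J : Instrument Λ dH dV) : Prop :=
  ∃ G : Instrument (Ω × Λ) dH (dK × dV),
    (∀ y, ∀ ρ : Matrix dH dH ℂ, IsState ρ → ∑ x, ptraceL (G.op (x, y) ρ) = J.op y ρ) ∧
    (∀ x, ∀ ρ : Matrix dH dH ℂ, IsState ρ → ∑ y, ptraceR (G.op (x, y) ρ) = I.op x ρ)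

/-- Compatibility of an instrument and a channel (a one-outcome instrument). -/
def InsChCompatible [Fintype Ω] [Fintype dH] [DecidableEq dH] [Fintype dK] [Fintype dV]
    (I : Instrument Ω dH dK) (Ψ : Channel dH dV) : Prop :=
  ∃ G : Instrument Ω dH (dK × dV),
    (∀ ρ : Matrix dH dH ℂ, IsState ρ → ∑ x, ptraceL (G.op x ρ) = Ψ.map ρ) ∧
    (∀ x, ∀ ρ : Matrix dH dH ℂ, IsState ρ → ptraceR (G.op x ρ) = I.op x ρ)

/-- Compatibility of two channels. -/
def ChCompatible [Fintype dH] [DecidableEq dH] [Fintype dK] [Fintype dV]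
    (Φ : Channel dH dK) (Ψ : Channel dH dV) : Prop :=
  ∃ Γ : Channel dH (dK × dV),
    (∀ ρ : Matrix dH dH ℂ, IsState ρ → ptraceL (Γ.map ρ) = Ψ.map ρ) ∧
    (∀ ρ : Matrix dH dH ℂ, IsState ρ → ptraceR (Γ.map ρ) = Φ.map ρ)

/-- Compatibility of a POVM and an instrument: existence of a joint instrument `G`
with `∑ x, G.op (x, y) = J.op y` and whose induced POVM has the POVM `A` as a margin. -/
def POVMInsCompatible [Fintype Ω] [Fintype Λ] [Fintype dH] [DecidableEq dH] [Fintype dK]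
    (A : POVM Ω dH) (J : Instrument Λ dH dK) : Prop :=
  ∃ G : Instrument (Ω × Λ) dH dK,
    (∀ y, ∑ x, G.op (x, y) = J.op y) ∧
    (∀ x, ∑ y, dualId (G.op (x, y)) = A.elem x)

/-- Compatibility (joint measurability) of two POVMs. -/
def POVMCompatible [Fintype Ω] [Fintype Λ] [Fintype dH] [DecidableEq dH]
    (A : POVM Ω dH) (B : POVM Λ dH) : Prop :=
  ∃ G : POVM (Ω × Λ) dH,
    (∀ y, ∑ x, G.elem (x, y) = B.elem y) ∧
    (∀ x, ∑ y, G.elem (x, y) = A.elem x)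

/-- Compatibility of a POVM and a channel: existence of an instrument implementing both. -/
def POVMChCompatible [Fintype Ω] [Fintype dH] [DecidableEq dH] [Fintype dK]
    (A : POVM Ω dH) (Ψ : Channel dH dK) : Prop :=
  ∃ G : Instrument Ω dH dK,
    (∑ x, G.op x) = Ψ.map ∧ ∀ x, dualId (G.op x) = A.elem x

/-- Instrument postprocessing: `I ⪯ J` if `I_x = ∑ y, R^(y)_x ∘ J_y` for
a family of instruments `R^(y)`. -/
def Postprocessed [Fintype Ω] [Fintype Λ] [Fintype dH] [DecidableEq dH] [Fintype dK]
    [Fintype dV] [DecidableEq dV] (I : Instrument Ω dH dK) (J : Instrument Λ dH dV) : Prop :=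
  ∃ R : Λ → Instrument Ω dV dK, ∀ x, I.op x = ∑ y, (R y).op x ∘ₗ J.op y

/-- An instrument `I` does not disturb an instrument `J`: `J_y ∘ Φ^I = J_y`. -/
def NonDisturbs [Fintype Ω] [Fintype Λ] [Fintype dH] [DecidableEq dH] [Fintype dV]
    (I : Instrument Ω dH dH) (J : Instrument Λ dH dV) : Prop :=
  ∀ y, J.op y ∘ₗ (∑ x, I.op x) = J.op y

/-- An instrument `I` does not disturb a channel `Ψ`: `Ψ ∘ Φ^I = Ψ`. -/
def InsNonDisturbsCh [Fintype Ω] [Fintype dH] [DecidableEq dH] [Fintype dV]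
    (I : Instrument Ω dH dH) (Ψ : Channel dH dV) : Prop :=
  Ψ.map ∘ₗ (∑ x, I.op x) = Ψ.map

/-- An instrument `I` does not disturb a POVM `A`:
the statistics of `A` are unchanged by the channel induced by `I`. -/
def InsNonDisturbsPOVM [Fintype Ω] [Fintype Λ] [Fintype dH] [DecidableEq dH]
    (I : Instrument Ω dH dH) (A : POVM Λ dH) : Prop :=
  ∀ y, ∀ ρ : Matrix dH dH ℂ,
    (A.elem y * ((∑ x, I.op x) ρ)).trace = (A.elem y * ρ).trace

/-- A POVM `A` does not disturb an instrument `J`: some instrument measuring `A`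
does not disturb `J`. -/
def POVMNonDisturbs [Fintype Ω] [Fintype Λ] [Fintype dH] [DecidableEq dH] [Fintype dV]
    (A : POVM Ω dH) (J : Instrument Λ dH dV) : Prop :=
  ∃ I : Instrument Ω dH dH, (∀ x, dualId (I.op x) = A.elem x) ∧ NonDisturbs I J

/-- A POVM `A` does not disturb a channel `Ψ`. -/
def POVMNonDisturbsCh [Fintype Ω] [Fintype dH] [DecidableEq dH] [Fintype dV]
    (A : POVM Ω dH) (Ψ : Channel dH dV) : Prop :=
  ∃ I : Instrument Ω dH dH, (∀ x, dualId (I.op x) = A.elem x) ∧ InsNonDisturbsCh I Ψ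

/-- A POVM `A` does not disturb a POVM `B`. -/
def POVMNonDisturbsPOVM [Fintype Ω] [Fintype Λ] [Fintype dH] [DecidableEq dH]
    (A : POVM Ω dH) (B : POVM Λ dH) : Prop :=
  ∃ I : Instrument Ω dH dH, (∀ x, dualId (I.op x) = A.elem x) ∧ InsNonDisturbsPOVM I B

/-- A sharp (projection-valued) POVM. -/
def IsSharp [Fintype Ω] [Fintype dH] [DecidableEq dH] (A : POVM Ω dH) : Prop :=
  ∀ x, A.elem x * A.elem x = A.elem x

/-- `(H_A, W, E)` is a dilation of the instrument `I`:
`W` is an isometry `H → H_A ⊗ K` and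
`I_x(ρ) = Tr_{H_A}[W ρ W* (E(x) ⊗ 1_K)]` on all states. -/
def IsDilation [Fintype Ω] [Fintype dH] [DecidableEq dH] [Fintype dK] [DecidableEq dK]
    [Fintype dA] [DecidableEq dA] (I : Instrument Ω dH dK)
    (W : Matrix (dA × dK) dH ℂ) (E : POVM Ω dA) : Prop :=
  Wᴴ * W = 1 ∧
  ∀ x, ∀ ρ : Matrix dH dH ℂ, IsState ρ →
    I.op x ρ = ptraceL (W * ρ * Wᴴ * (E.elem x ⊗ₖ (1 : Matrix dK dK ℂ)))

/-- Minimality of a Stinespring isometry `W : H → H_A ⊗ K`: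
the span of `{(1 ⊗ B) W φ}` is everything. -/
def IsMinimalW [Fintype dH] [Fintype dK] [DecidableEq dK] [Fintype dA] [DecidableEq dA]
    (W : Matrix (dA × dK) dH ℂ) : Prop :=
  Submodule.span ℂ {v : (dA × dK) → ℂ |
    ∃ (B : Matrix dK dK ℂ) (φ : dH → ℂ),
      v = ((1 : Matrix dA dA ℂ) ⊗ₖ B) *ᵥ (W *ᵥ φ)} = ⊤

open scoped MatrixOrder in
/-- `IC` is the complementary instrument of the instrument dilated by `(W, E)`:
`IC_x(ρ) = Tr_K[(√E(x) ⊗ 1) W ρ W* (√E(x) ⊗ 1)]`. -/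
def IsComplementaryOf [Fintype Ω] [Fintype dH] [DecidableEq dH] [Fintype dK]
    [DecidableEq dK] [Fintype dA] [DecidableEq dA] (W : Matrix (dA × dK) dH ℂ) (E : POVM Ω dA)
    (IC : Instrument Ω dH dA) : Prop :=
  ∀ x, ∀ ρ : Matrix dH dH ℂ,
    IC.op x ρ =
      ptraceR ((CFC.sqrt (E.elem x) ⊗ₖ (1 : Matrix dK dK ℂ)) * (W * ρ * Wᴴ) *
        (CFC.sqrt (E.elem x) ⊗ₖ (1 : Matrix dK dK ℂ)))

/-- A measure-and-prepare instrument: `I_x(ρ) = tr[A(x) ρ] ξ_x`. -/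
def IsMeasureAndPrepare [Fintype Ω] [Fintype dH] [DecidableEq dH] [Fintype dK]
    [DecidableEq dK] (I : Instrument Ω dH dK) : Prop :=
  ∃ (A : POVM Ω dH) (ξ : Ω → Matrix dK dK ℂ),
    (∀ x, IsState (ξ x)) ∧
    ∀ x, ∀ ρ : Matrix dH dH ℂ, I.op x ρ = ((A.elem x * ρ).trace) • ξ x

/-- A pure state: a state which is a (rank-one) projection. -/
def IsPureState [Fintype dK] (ρ : Matrix dK dK ℂ) : Prop :=
  IsState ρ ∧ ρ * ρ = ρ

/-- A rank-1 POVM: every effect has rank at most one. -/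
def IsRankOnePOVM [Fintype Ω] [Fintype dH] [DecidableEq dH] (A : POVM Ω dH) : Prop :=
  ∀ x, (A.elem x).rank ≤ 1

/-- POVM postprocessing: `B(y) = ∑ x, ν x y • A(x)` for a stochastic matrix `ν`. -/
def POVMPostprocessed [Fintype Ω] [Fintype Λ] [Fintype dH] [DecidableEq dH]
    (B : POVM Λ dH) (A : POVM Ω dH) : Prop :=
  ∃ ν : Ω → Λ → ℝ, (∀ x y, 0 ≤ ν x y) ∧ (∀ x, ∑ y, ν x y = 1) ∧
    ∀ y, B.elem y = ∑ x, (ν x y : ℂ) • A.elem x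

/-- A measure-and-prepare instrument preparing pure states. -/
def IsMeasureAndPreparePure [Fintype Ω] [Fintype dH] [DecidableEq dH] [Fintype dK]
    [DecidableEq dK] (I : Instrument Ω dH dK) : Prop :=
  ∃ (A : POVM Ω dH) (ξ : Ω → Matrix dK dK ℂ),
    (∀ x, IsPureState (ξ x)) ∧
    ∀ x, ∀ ρ : Matrix dH dH ℂ, I.op x ρ = ((A.elem x * ρ).trace) • ξ x

/-!
A partial trace preserves the trace, so discarding the `V` output of a joint instrument of `I` and
`J` leaves a joint instrument of `I` and the POVM induced by `J`, which is `B`. Conversely, given a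
joint instrument of `B` and `I`, preparing the state `ξ y` next to the output whenever the outcome
of `B` is `y` adds the marginal `J` without disturbing the marginal `I`. Compatibility of
instruments compares marginals on states only, which suffices because states span the matrix
algebra.
-/

open scoped MatrixOrder Matrix.Norms.L2Operator in
theorem span_setOf_isState [Fintype dH] :
    Submodule.span ℂ {ρ : Matrix dH dH ℂ | IsState ρ} = ⊤ := by
  classical
  rw [eq_top_iff, ← CStarAlgebra.span_nonneg, Submodule.span_le]
  intro M hM
  have hpos : M.PosSemidef := nonneg_iff_posSemidef.mp hM
  by_cases htr : M.trace = 0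
  · rw [hpos.trace_eq_zero_iff.mp htr]
    exact Submodule.zero_mem _
  · have hstate : IsState (M.trace⁻¹ • M) :=
      ⟨hpos.smul (inv_nonneg.mpr hpos.trace_nonneg), by
        rw [trace_smul, smul_eq_mul, inv_mul_cancel₀ htr]⟩
    rw [← smul_inv_smul₀ htr M]
    exact Submodule.smul_mem _ _ (Submodule.subset_span hstate)

theorem linearMap_eq_iff_forall_isState {E : Type*} [AddCommMonoid E] [Module ℂ E] [Fintype dH]
    {f g : Matrix dH dH ℂ →ₗ[ℂ] E} : f = g ↔ ∀ ρ, IsState ρ → f ρ = g ρ :=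
  ⟨fun h _ _ => h ▸ rfl, fun h => LinearMap.ext_on span_setOf_isState h⟩

theorem trace_dualId_mul [Fintype dH] [DecidableEq dH] [Fintype dK] (Φ : MatMap dH dK)
    (ρ : Matrix dH dH ℂ) : (dualId Φ * ρ).trace = (Φ ρ).trace := by
  have h : traceLinearMap dH ℂ ℂ ∘ₗ LinearMap.mulLeft ℂ (dualId Φ) =
      traceLinearMap dK ℂ ℂ ∘ₗ Φ := by
    refine ext_linearMap ℂ fun i j => LinearMap.ext_ring ?_
    simp [trace_mul_single, dualId]
  exact LinearMap.congr_fun h ρ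

theorem dualId_eq_iff [Fintype dH] [DecidableEq dH] [Fintype dK] {Φ : MatMap dH dK}
    {A : Matrix dH dH ℂ} : dualId Φ = A ↔ ∀ ρ, (Φ ρ).trace = (A * ρ).trace := by
  simp only [ext_iff_trace_mul_right, trace_dualId_mul]

theorem dualId_sum {ι : Type*} [Fintype dH] [DecidableEq dH] [Fintype dK] (s : Finset ι)
    (Φ : ι → MatMap dH dK) : dualId (∑ i ∈ s, Φ i) = ∑ i ∈ s, dualId (Φ i) := by
  rw [dualId_eq_iff]
  intro ρ
  simp only [LinearMap.sum_apply, trace_sum, Finset.sum_mul, trace_dualId_mul]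

theorem IsTP.dualId_comp [Fintype dH] [DecidableEq dH] [Fintype dK] [Fintype dV]
    {Ψ : MatMap dK dV} (hΨ : IsTP Ψ) (Φ : MatMap dH dK) : dualId (Ψ ∘ₗ Φ) = dualId Φ := by
  rw [dualId_eq_iff]
  intro ρ
  rw [LinearMap.comp_apply, hΨ, trace_dualId_mul]

theorem choiMatrix_comp [DecidableEq dH] [Fintype dK] [DecidableEq dK]
    (Ψ : MatMap dK dV) (Φ : MatMap dH dK) :
    choiMatrix (Ψ ∘ₗ Φ) = of fun p q =>
      ∑ k, ∑ l, choiMatrix Φ (p.1, k) (q.1, l) * choiMatrix Ψ (k, p.2) (l, q.2) := by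
  have h (M : Matrix dK dK ℂ) : Ψ M = ∑ k, ∑ l, M k l • Ψ (single k l 1) := by
    conv_lhs => rw [matrix_eq_sum_single M]
    simp only [map_sum, ← map_smul, smul_single, smul_eq_mul, mul_one]
  ext p q
  rw [choiMatrix, LinearMap.comp_apply, h]
  simp only [of_apply, Matrix.sum_apply, Matrix.smul_apply, smul_eq_mul, choiMatrix]

theorem posSemidef_sum_blocks {m n R : Type*} [Finite m] [Fintype n] [Ring R]
    [PartialOrder R] [StarRing R] {N : Matrix (m × n) (m × n) R} (hN : N.PosSemidef) :
    (of fun p q => ∑ k, ∑ l, N (p, k) (q, l)).PosSemidef := by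
  classical
  cases nonempty_fintype m
  convert hN.conjTranspose_mul_mul_same ((1 : Matrix m m R).submatrix Prod.fst id) using 1
  ext p q
  simp only [of_apply, mul_apply, Fintype.sum_prod_type, conjTranspose_submatrix,
    conjTranspose_one, submatrix_apply, one_apply, id]
  simp only [ite_mul, mul_ite, one_mul, mul_one, zero_mul, mul_zero, Finset.sum_ite_irrel,
    Finset.sum_const_zero, Finset.sum_ite_eq, Finset.sum_ite_eq', Finset.mem_univ, ↓reduceIte]
  exact Finset.sum_comm

theorem IsCP.comp [Fintype dH] [DecidableEq dH] [Fintype dK] [DecidableEq dK] [Fintype dV]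
    {Ψ : MatMap dK dV} {Φ : MatMap dH dK} (hΨ : IsCP Ψ) (hΦ : IsCP Φ) : IsCP (Ψ ∘ₗ Φ) := by
  classical
  rw [IsCP, choiMatrix_comp]
  simpa only [submatrix_apply, kroneckerMap_apply] using posSemidef_sum_blocks
    ((PosSemidef.kronecker hΦ hΨ).submatrix
      fun p : (dH × dV) × dK => ((p.1.1, p.2), (p.2, p.1.2)))

theorem choiMatrix_id [DecidableEq dK] :
    choiMatrix (LinearMap.id : MatMap dK dK) =
      vecMulVec (fun p => if p.1 = p.2 then 1 else 0)
        (star fun p => if p.1 = p.2 then 1 else 0) := by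
  ext p q
  simp [choiMatrix, single_apply, vecMulVec_apply, ← ite_and, and_comm]

theorem isCP_id [Fintype dK] [DecidableEq dK] : IsCP (LinearMap.id : MatMap dK dK) := by
  rw [IsCP, choiMatrix_id]
  exact posSemidef_vecMulVec_self_star _

theorem ptraceR_kronecker [Fintype dV] (M : Matrix dK dK ℂ) (N : Matrix dV dV ℂ) :
    ptraceR (M ⊗ₖ N) = N.trace • M := by
  ext i j
  simp [ptraceR, trace, ← Finset.mul_sum, mul_comm]

theorem ptraceL_kronecker [Fintype dK] (M : Matrix dK dK ℂ) (N : Matrix dV dV ℂ) :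
    ptraceL (M ⊗ₖ N) = M.trace • N := by
  ext i j
  simp [ptraceL, trace, ← Finset.sum_mul]

/-- The partial trace over the first tensor factor as a super-operator. -/
def ptraceLMap [Fintype dA] : MatMap (dA × dK) dK where
  toFun := ptraceL
  map_add' M N := by ext i j; simp [ptraceL, Finset.sum_add_distrib]
  map_smul' c M := by ext i j; simp [ptraceL, Finset.mul_sum]

/-- The partial trace over the second tensor factor as a super-operator. -/
def ptraceRMap [Fintype dV] : MatMap (dK × dV) dK where
  toFun := ptraceR
  map_add' M N := by ext i j; simp [ptraceR, Finset.sum_add_distrib]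
  map_smul' c M := by ext i j; simp [ptraceR, Finset.mul_sum]

theorem isTP_ptraceLMap [Fintype dA] [Fintype dK] :
    IsTP (ptraceLMap : MatMap (dA × dK) dK) := by
  intro M
  simp only [trace, diag, Fintype.sum_prod_type]
  exact Finset.sum_comm

theorem isTP_ptraceRMap [Fintype dK] [Fintype dV] :
    IsTP (ptraceRMap : MatMap (dK × dV) dK) := by
  intro M
  simp [ptraceRMap, ptraceR, trace, Fintype.sum_prod_type]

theorem choiMatrix_ptraceRMap [DecidableEq dK] [Fintype dV] [DecidableEq dV] :
    choiMatrix (ptraceRMap : MatMap (dK × dV) dK) =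
      (choiMatrix (LinearMap.id : MatMap dK dK) ⊗ₖ (1 : Matrix dV dV ℂ)).submatrix
        (fun p => ((p.1.1, p.2), p.1.2)) (fun p => ((p.1.1, p.2), p.1.2)) := by
  ext ⟨⟨k, v⟩, k'⟩ ⟨⟨l, w⟩, l'⟩
  by_cases hvw : v = w <;>
    simp [choiMatrix, ptraceRMap, ptraceR, single_apply, one_apply, ite_and, eq_comm, hvw,
      -Finset.sum_boole]

theorem isCP_ptraceRMap [Fintype dK] [DecidableEq dK] [Fintype dV] [DecidableEq dV] :
    IsCP (ptraceRMap : MatMap (dK × dV) dK) := by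
  rw [IsCP, choiMatrix_ptraceRMap]
  exact (PosSemidef.kronecker isCP_id PosSemidef.one).submatrix _

theorem choiMatrix_kroneckerBilinear_flip [DecidableEq dK] (ξ : Matrix dV dV ℂ) :
    choiMatrix (kroneckerBilinear.flip ξ : MatMap dK (dK × dV)) =
      (choiMatrix (LinearMap.id : MatMap dK dK) ⊗ₖ ξ).submatrix
        (fun p => ((p.1, p.2.1), p.2.2)) (fun p => ((p.1, p.2.1), p.2.2)) :=
  rfl

theorem isCP_kroneckerBilinear_flip [Fintype dK] [DecidableEq dK] [Fintype dV]
    {ξ : Matrix dV dV ℂ} (hξ : ξ.PosSemidef) :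
    IsCP (kroneckerBilinear.flip ξ : MatMap dK (dK × dV)) := by
  classical
  rw [IsCP, choiMatrix_kroneckerBilinear_flip]
  exact (PosSemidef.kronecker isCP_id hξ).submatrix _

/-- The channel discarding the second of two subsystems. -/
def Channel.discardRight [Fintype dK] [DecidableEq dK] [Fintype dV] [DecidableEq dV] :
    Channel (dK × dV) dK where
  map := ptraceRMap
  cp := isCP_ptraceRMap
  tp := isTP_ptraceRMap

/-- The channel `M ↦ M ⊗ ξ` preparing the state `ξ` on an additional subsystem. -/
def Channel.appendState [Fintype dK] [DecidableEq dK] [Fintype dV] (ξ : Matrix dV dV ℂ)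
    (hξ : IsState ξ) : Channel dK (dK × dV) where
  map := kroneckerBilinear.flip ξ
  cp := isCP_kroneckerBilinear_flip hξ.1
  tp M := by
    change (M ⊗ₖ ξ).trace = M.trace
    rw [trace_kronecker, hξ.2, mul_one]

/-- The instrument `G` followed by the channel `T x` whenever the outcome of `G` is `x`. -/
def Instrument.postcomp [Fintype Ω] [Fintype dH] [DecidableEq dH] [Fintype dK] [DecidableEq dK]
    [Fintype dV] (G : Instrument Ω dH dK) (T : Ω → Channel dK dV) : Instrument Ω dH dV where
  op x := (T x).map ∘ₗ G.op x
  cp x := (T x).cp.comp (G.cp x)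
  tni x ρ hρ := ((T x).tp _).trans_le (G.tni x ρ hρ)
  tp ρ := by
    rw [← G.tp ρ]
    simp only [LinearMap.sum_apply, LinearMap.comp_apply, trace_sum, (T _).tp _]

/-- The instrument `G` with its outcomes relabelled along `e`. -/
def Instrument.reindex [Fintype Ω] [Fintype Λ] [Fintype dH] [DecidableEq dH] [Fintype dK]
    (e : Ω ≃ Λ) (G : Instrument Ω dH dK) : Instrument Λ dH dK where
  op y := G.op (e.symm y)
  cp y := G.cp _
  tni y := G.tni _
  tp := by
    rw [e.symm.sum_comp G.op]
    exact G.tp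

section Compatibility

variable [Fintype Ω] [Fintype Λ] [Fintype dH] [DecidableEq dH] [Fintype dK] [Fintype dV]
  {I : Instrument Ω dH dK} {J : Instrument Λ dH dV} {B : POVM Λ dH}

theorem insCompatible_iff :
    InsCompatible I J ↔ ∃ G : Instrument (Ω × Λ) dH (dK × dV),
      (∀ y, ∑ x, ptraceLMap ∘ₗ G.op (x, y) = J.op y) ∧
      (∀ x, ∑ y, ptraceRMap ∘ₗ G.op (x, y) = I.op x) := by
  simp only [linearMap_eq_iff_forall_isState, LinearMap.sum_apply]
  rfl

theorem InsCompatible.povmInsCompatible (h : InsCompatible I J)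
    (hB : ∀ y, dualId (J.op y) = B.elem y) : POVMInsCompatible B I := by
  classical
  obtain ⟨G, hGJ, hGI⟩ := insCompatible_iff.mp h
  refine ⟨(G.postcomp fun _ => Channel.discardRight).reindex (Equiv.prodComm Ω Λ), hGI, fun y => ?_⟩
  calc ∑ x, dualId (ptraceRMap ∘ₗ G.op (x, y))
      = ∑ x, dualId (ptraceLMap ∘ₗ G.op (x, y)) := by
        simp only [isTP_ptraceRMap.dualId_comp, isTP_ptraceLMap.dualId_comp]
    _ = dualId (J.op y) := by rw [← dualId_sum, hGJ]
    _ = B.elem y := hB y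

theorem POVMInsCompatible.insCompatible {ξ : Λ → Matrix dV dV ℂ} (h : POVMInsCompatible B I)
    (hξ : ∀ y, IsState (ξ y)) (hJ : ∀ y ρ, J.op y ρ = (B.elem y * ρ).trace • ξ y) :
    InsCompatible I J := by
  classical
  obtain ⟨G, hGI, hGB⟩ := h
  refine ⟨(G.postcomp fun p => Channel.appendState (ξ p.1) (hξ p.1)).reindex (Equiv.prodComm Λ Ω),
    fun y ρ _ => ?_, fun x ρ _ => ?_⟩
  · change ∑ x, ptraceL (G.op (y, x) ρ ⊗ₖ ξ y) = J.op y ρ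
    calc ∑ x, ptraceL (G.op (y, x) ρ ⊗ₖ ξ y)
        = (∑ x, (dualId (G.op (y, x)) * ρ).trace) • ξ y := by
          simp only [ptraceL_kronecker, trace_dualId_mul, Finset.sum_smul]
      _ = J.op y ρ := by rw [← trace_sum, ← Finset.sum_mul, hGB, hJ]
  · change ∑ y, ptraceR (G.op (y, x) ρ ⊗ₖ ξ y) = I.op x ρ
    calc ∑ y, ptraceR (G.op (y, x) ρ ⊗ₖ ξ y)
        = ∑ y, G.op (y, x) ρ := by simp only [ptraceR_kronecker, (hξ _).2, one_smul]
      _ = I.op x ρ := by rw [← hGI x, LinearMap.sum_apply]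

end Compatibility

/-- An instrument `I` is compatible with a POVM `B` if and only if `I` is
compatible with any measure-and-prepare instrument `J` that measures `B`
(`J_y(ρ) = tr[B(y)ρ] ξ_y` for states `ξ_y`). -/
theorem compatible_with_povm_iff_compatible_with_map_instrument
    [Fintype Ω] [Fintype Λ] [Fintype dH] [DecidableEq dH] [Fintype dK] [Fintype dV]
    (I : Instrument Ω dH dK) (B : POVM Λ dH)
    (J : Instrument Λ dH dV)
    (ξ : Λ → Matrix dV dV ℂ) (hξ : ∀ y, IsState (ξ y))
    (hJ : ∀ y, ∀ ρ : Matrix dH dH ℂ, J.op y ρ = ((B.elem y * ρ).trace) • ξ y) :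
    POVMInsCompatible B I ↔ InsCompatible I J := by
  have hB (y : Λ) : dualId (J.op y) = B.elem y :=
    dualId_eq_iff.mpr fun ρ => by rw [hJ, trace_smul, (hξ y).2, smul_eq_mul, mul_one]
  exact ⟨fun h => h.insCompatible hξ hJ, fun h => h.povmInsCompatible hB⟩
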